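/- arXiv:math/0311488 — 2 statements merged into one kernel-verified Lean document; each statement's English description precedes it below -/
import Mathlib

section
/- Let U = ⊕_{k=1}^{d-1} U^{(k)} be the positively graded part of the derivation algebra of the free nilpotent Lie algebra L[V,d] of class d ≥ 2 (so U^{(k)} consists of derivations raising degree by k). Then U is a nilpotent Lie algebra of class exactly d−1, and the center of U equals the top homogeneous component U^{(d-1)}. -/
/-- The free nilpotent Lie algebra of class `d` on `n` generators: the quotient of the
free Lie algebra by the `d`-th term of its lower central series. -/
abbrev FreeNilpotentLieAlgebra (K : Type*) [Field K] (n d : ℕ) :=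
  FreeLieAlgebra K (Fin n) ⧸
    LieModule.lowerCentralSeries K (FreeLieAlgebra K (Fin n)) (FreeLieAlgebra K (Fin n)) d

/-- A derivation has (strictly) positive degree iff it pushes each term of the lower
central series filtration one step deeper: this characterizes membership in
`U = ⊕_{k=1}^{d-1} Der^{(k)}`. -/
def IsPosDegreeDerivation (K : Type*) [Field K] (n d : ℕ)
    (δ : LieDerivation K (FreeNilpotentLieAlgebra K n d) (FreeNilpotentLieAlgebra K n d)) :
    Prop :=
  ∀ k : ℕ, ∀ x ∈ LieModule.lowerCentralSeries K (FreeNilpotentLieAlgebra K n d)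
      (FreeNilpotentLieAlgebra K n d) k,
    δ x ∈ LieModule.lowerCentralSeries K (FreeNilpotentLieAlgebra K n d)
      (FreeNilpotentLieAlgebra K n d) (k + 1)

/-- Iterated (right-nested) Lie bracket of a list of elements. -/
def iterBracket {L : Type*} [LieRing L] : List L → L
  | [] => 0
  | [a] => a
  | a :: rest => ⁅a, iterBracket rest⁆


namespace PosDer

open LieModule

section general
variable {K : Type*} [Field K] {L : Type*} [LieRing L] [LieAlgebra K L]

lemma lcs_succ_induct (k : ℕ) (N : Submodule K L)
    (h : ∀ a : L, ∀ b ∈ lowerCentralSeries K L L k, ⁅a, b⁆ ∈ N) :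
    ∀ y ∈ lowerCentralSeries K L L (k + 1), y ∈ N := by
  intro y hy
  rw [lowerCentralSeries_succ, ← LieSubmodule.mem_toSubmodule,
    LieSubmodule.lieIdeal_oper_eq_linear_span'] at hy
  refine (Submodule.span_le (p := N)).2 ?_ hy
  rintro _ ⟨a, -, b, hb, rfl⟩
  exact h a b hb

lemma lie_mem_lcs_succ {k : ℕ} (a : L) {b : L} (hb : b ∈ lowerCentralSeries K L L k) :
    ⁅a, b⁆ ∈ lowerCentralSeries K L L (k + 1) := by
  rw [lowerCentralSeries_succ]
  exact LieSubmodule.lie_mem_lie (LieSubmodule.mem_top a) hb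

lemma lcs_anti {i j : ℕ} (h : i ≤ j) {x : L} (hx : x ∈ lowerCentralSeries K L L j) :
    x ∈ lowerCentralSeries K L L i :=
  antitone_lowerCentralSeries K L L h hx

lemma lie_lcs (i : ℕ) : ∀ (j : ℕ) (a b : L), a ∈ lowerCentralSeries K L L i →
    b ∈ lowerCentralSeries K L L j → ⁅a, b⁆ ∈ lowerCentralSeries K L L (i + j + 1) := by
  induction i with
  | zero => intro j a b _ hb; simpa using lie_mem_lcs_succ a hb
  | succ i ih =>
    intro j a b ha hb
    have h := lcs_succ_induct i ((lowerCentralSeries K L L (i + 1 + j + 1)).toSubmodule.comap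
      ((LieAlgebra.ad K L b : Module.End K L))) ?_ a ha
    rotate_left
    · intro x y hy
      simp only [Submodule.mem_comap, LieSubmodule.mem_toSubmodule, LieAlgebra.ad_apply]
      rw [← lie_skew, lie_lie]
      refine neg_mem (sub_mem ?_ ?_)
      · have := lie_mem_lcs_succ x (ih j y b hy hb)
        rwa [show i + 1 + j + 1 = i + j + 1 + 1 by omega]
      · have := ih (j+1) y ⁅x, b⁆ hy (lie_mem_lcs_succ x hb)
        rwa [show i + 1 + j + 1 = i + (j + 1) + 1 by omega]
    · simp only [Submodule.mem_comap, LieSubmodule.mem_toSubmodule, LieAlgebra.ad_apply] at h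
      rw [← lie_skew]; exact neg_mem h

/-- `δ` shifts the lower central series by `m`. -/
def Shift (K : Type*) [Field K] {L : Type*} [LieRing L] [LieAlgebra K L] (m : ℕ)
    (δ : LieDerivation K L L) : Prop :=
  ∀ k : ℕ, ∀ x ∈ lowerCentralSeries K L L k, δ x ∈ lowerCentralSeries K L L (k + m)

lemma Shift.of_zero {m : ℕ} {δ : LieDerivation K L L}
    (h : ∀ x, δ x ∈ lowerCentralSeries K L L m) : Shift K m δ := by
  intro k
  induction k with
  | zero => intro x _; simpa using h x
  | succ k ih =>
    refine fun x hx => lcs_succ_induct k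
      ((lowerCentralSeries K L L (k + 1 + m)).toSubmodule.comap (δ : L →ₗ[K] L)) ?_ x hx
    intro a b hb
    simp only [Submodule.mem_comap, LieSubmodule.mem_toSubmodule, LieDerivation.coeFn_coe,
      LieDerivation.apply_lie_eq_sub]
    refine sub_mem ?_ ?_
    · have := lie_mem_lcs_succ a (ih b hb)
      rwa [show k + 1 + m = k + m + 1 by omega]
    · have := lie_lcs k m b (δ a) hb (h a)
      rwa [show k + 1 + m = k + m + 1 by omega]

lemma Shift.lie {m m' : ℕ} {δ δ' : LieDerivation K L L} (h : Shift K m δ) (h' : Shift K m' δ') :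
    Shift K (m + m') ⁅δ, δ'⁆ := by
  intro k x hx
  rw [LieDerivation.lie_apply]
  refine sub_mem ?_ ?_
  · have := h _ _ (h' k x hx)
    rwa [show k + (m + m') = k + m' + m by omega]
  · have := h' _ _ (h k x hx)
    rwa [show k + (m + m') = k + m + m' by omega]

lemma Shift.eq_zero {d : ℕ} (hL : lowerCentralSeries K L L d = ⊥) {δ : LieDerivation K L L}
    (h : Shift K d δ) : δ = 0 := by
  ext x
  have := h 0 x (by simp)
  rw [Nat.zero_add, hL] at this
  simpa using this

lemma shift_iter (l : List (LieDerivation K L L)) (hne : l ≠ [])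
    (h : ∀ δ ∈ l, Shift K 1 δ) : Shift K l.length (iterBracket l) := by
  induction l with
  | nil => exact absurd rfl hne
  | cons a t ih =>
    cases t with
    | nil => simpa [iterBracket] using h a (by simp)
    | cons b t =>
      have := (h a (by simp)).lie (ih (by simp) (fun δ hδ => h δ (by simp [hδ])))
      rw [Nat.add_comm] at this
      exact this

lemma shift_ad (x : L) : Shift K 1 (LieDerivation.ad K L x) := by
  intro k y hy
  have h : LieDerivation.ad K L x y = ⁅x, y⁆ := by simp
  rw [h]
  exact lie_mem_lcs_succ x hy

lemma iter_ad (x y : L) (m : ℕ) :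
    iterBracket (List.replicate m (LieDerivation.ad K L x) ++ [LieDerivation.ad K L y]) =
      LieDerivation.ad K L (((LieAlgebra.ad K L x : Module.End K L) ^ m) y) := by
  induction m with
  | zero => simp [iterBracket]
  | succ m ih =>
    rw [List.replicate_succ, List.cons_append, pow_succ', Module.End.mul_apply,
      LieAlgebra.ad_apply, LieHom.map_lie, ← ih]
    cases h : (List.replicate m (LieDerivation.ad K L x) ++ [LieDerivation.ad K L y]) with
    | nil => simp at h
    | cons b t => rfl

end general

section free
variable {K : Type*} [Field K] {n : ℕ}

lemma free_induct {X : Type*} (p : FreeLieAlgebra K X → Prop)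
    (h0 : p 0) (hadd : ∀ a b, p a → p b → p (a + b)) (hsmul : ∀ (c : K) a, p a → p (c • a))
    (hlie : ∀ a b, p a → p b → p ⁅a, b⁆) (hof : ∀ x, p (FreeLieAlgebra.of K x)) : ∀ y, p y := by
  let S : LieSubalgebra K (FreeLieAlgebra K X) :=
    { carrier := {a | p a}
      add_mem' := fun ha hb => hadd _ _ ha hb
      zero_mem' := h0
      smul_mem' := fun c _ ha => hsmul c _ ha
      lie_mem' := fun ha hb => hlie _ _ ha hb }
  let f : FreeLieAlgebra K X →ₗ⁅K⁆ S :=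
    FreeLieAlgebra.lift K (fun x => (⟨FreeLieAlgebra.of K x, hof x⟩ : S))
  have h : S.incl.comp f = LieHom.id := by
    apply FreeLieAlgebra.hom_ext
    intro x
    simp [f]
  intro y
  have := LieHom.congr_fun h y
  simp only [LieHom.comp_apply, LieSubalgebra.coe_incl, LieHom.id_apply] at this
  rw [← this]
  exact (f y).2

attribute [local instance] LieRing.ofAssociativeRing

/-- free associative algebra -/
abbrev Assoc (K : Type*) [Field K] (n : ℕ) := MonoidAlgebra K (FreeMonoid (Fin n))

/-- letter -/
noncomputable def letter (K : Type*) [Field K] {n : ℕ} (i : Fin n) : Assoc K n :=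
  MonoidAlgebra.single (FreeMonoid.of i) 1

/-- Canonical map to the free associative algebra. -/
noncomputable def phi (K : Type*) [Field K] (n : ℕ) : FreeLieAlgebra K (Fin n) →ₗ⁅K⁆ Assoc K n :=
  FreeLieAlgebra.lift K (fun i => letter K i)

/-- elements with no coefficients in words of length `< k`. -/
def fil (K : Type*) [Field K] (n k : ℕ) : Submodule K (Assoc K n) where
  carrier := {a | ∀ w : FreeMonoid (Fin n), w.length < k → a.coeff w = 0}
  add_mem' := by
    intro a b ha hb w hw
    simp [ha w hw, hb w hw]
  zero_mem' := by intro w _; simp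
  smul_mem' := by
    intro c a ha w hw
    simp [ha w hw]

lemma mem_fil {k : ℕ} {a : Assoc K n} :
    a ∈ fil K n k ↔ ∀ w : FreeMonoid (Fin n), w.length < k → a.coeff w = 0 := Iff.rfl

lemma mul_mem_fil {i j : ℕ} {a b : Assoc K n} (ha : a ∈ fil K n i) (hb : b ∈ fil K n j) :
    a * b ∈ fil K n (i + j) := by
  classical
  intro w hw
  rw [MonoidAlgebra.coeff_mul]
  refine Finset.sum_eq_zero fun u _ => Finset.sum_eq_zero fun v _ => ?_
  dsimp only
  split_ifs with h
  · have hl : u.length + v.length = w.length := by rw [← h, FreeMonoid.length_mul]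
    by_cases hu : u.length < i
    · rw [ha u hu, zero_mul]
    · rw [hb v (by omega), mul_zero]
  · rfl

lemma letter_mem_fil (i : Fin n) : letter K i ∈ fil K n 1 := by
  classical
  intro w hw
  have : w ≠ FreeMonoid.of i := by rintro rfl; simp at hw
  simp [letter, this.symm]

lemma phi_mem_one (y : FreeLieAlgebra K (Fin n)) : phi K n y ∈ fil K n 1 := by
  refine free_induct (fun y => phi K n y ∈ fil K n 1) (by simp) ?_ ?_ ?_ ?_ y
  · intro a b ha hb; rw [map_add]; exact add_mem ha hb
  · intro c a ha; rw [map_smul]; exact Submodule.smul_mem _ _ ha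
  · intro a b ha hb
    rw [LieHom.map_lie, Ring.lie_def]
    have h2 := sub_mem (mul_mem_fil ha hb) (mul_mem_fil hb ha)
    intro w hw
    exact h2 w (by omega)
  · intro i
    simpa [phi] using letter_mem_fil i

lemma phi_mem (k : ℕ) : ∀ y ∈ lowerCentralSeries K (FreeLieAlgebra K (Fin n))
    (FreeLieAlgebra K (Fin n)) k, phi K n y ∈ fil K n (k + 1) := by
  induction k with
  | zero => intro y _; exact phi_mem_one y
  | succ k ih =>
    refine fun y hy => lcs_succ_induct k
      ((fil K n (k + 1 + 1)).comap (phi K n : FreeLieAlgebra K (Fin n) →ₗ[K] Assoc K n)) ?_ y hy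
    intro a b hb
    have h1 := phi_mem_one a
    have h2 := ih b hb
    change phi K n ⁅a, b⁆ ∈ fil K n (k + 1 + 1)
    rw [LieHom.map_lie, Ring.lie_def]
    refine sub_mem ?_ (mul_mem_fil h2 h1)
    have := mul_mem_fil h1 h2
    rwa [Nat.add_comm] at this

lemma coeff_lie_letter (i : Fin n) (a : Assoc K n) (w : FreeMonoid (Fin n))
    (hw : ∀ v, v * FreeMonoid.of i ≠ FreeMonoid.of i * w) :
    (⁅letter K i, a⁆ : Assoc K n).coeff (FreeMonoid.of i * w) = a.coeff w := by
  rw [Ring.lie_def, letter, MonoidAlgebra.coeff_sub, Finsupp.sub_apply,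
    MonoidAlgebra.coeff_mul_single_of_forall_mul_ne _ _ hw]
  simp

lemma ends_ne {i j : Fin n} (hij : i ≠ j) (u v : FreeMonoid (Fin n)) :
    u * FreeMonoid.of i ≠ v * FreeMonoid.of j := by
  intro h
  have := congrArg (fun l => (FreeMonoid.toList l).getLast?) h
  simp at this
  exact hij this

lemma fil_of_comm {i j : Fin n} (hij : i ≠ j) {m : ℕ} {a : Assoc K n} (ha : a ∈ fil K n 1)
    (hi : ⁅letter K i, a⁆ ∈ fil K n (m + 1)) (hj : ⁅letter K j, a⁆ ∈ fil K n (m + 1)) :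
    a ∈ fil K n m := by
  intro w hw
  by_cases h0 : w.length < 1
  · exact ha w h0
  obtain ⟨v, k, rfl⟩ : ∃ v k, w = v * FreeMonoid.of k := by
    rcases List.eq_nil_or_concat (FreeMonoid.toList w) with h | ⟨v, k, h⟩
    · exfalso; apply h0; change (FreeMonoid.toList w).length < 1; simp [h]
    · exact ⟨FreeMonoid.ofList v, k, by
        apply FreeMonoid.toList.injective; simpa using h⟩
  have key : ∀ l : Fin n, l ≠ k → ⁅letter K l, a⁆ ∈ fil K n (m + 1) →
      a.coeff (v * FreeMonoid.of k) = 0 := by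
    intro l hl h
    rw [← coeff_lie_letter l a]
    · apply h; simp only [FreeMonoid.length_mul, FreeMonoid.length_of] at hw ⊢; omega
    · intro u; rw [← mul_assoc]; exact ends_ne hl _ _
  by_cases hk : i = k
  · exact key j (by rw [← hk]; exact hij.symm) hj
  · exact key i hk hi

lemma phi_pow (i j : Fin n) (hij : i ≠ j) (m : ℕ) :
    (phi K n (((LieAlgebra.ad K _ (FreeLieAlgebra.of K i) : Module.End K _) ^ m)
      (FreeLieAlgebra.of K j))).coeff (FreeMonoid.of i ^ m * FreeMonoid.of j) = 1 := by
  induction m with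
  | zero => simp [phi, letter]
  | succ m ih =>
    rw [pow_succ', Module.End.mul_apply, LieAlgebra.ad_apply, LieHom.map_lie, pow_succ', mul_assoc]
    have : phi K n (FreeLieAlgebra.of K i) = letter K i := by simp [phi]
    rw [this, coeff_lie_letter, ih]
    intro v; rw [← mul_assoc]; exact ends_ne hij _ _

/-- The operator `(f, c) ↦ ([x, f] + c x, 0)`. -/
noncomputable def op {L : Type*} [LieRing L] [LieAlgebra K L] (x : L) : Module.End K (L × K) :=
  LinearMap.prod ((LieAlgebra.ad K L x : L →ₗ[K] L).comp (LinearMap.fst K L K)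
    + (LinearMap.toSpanSingleton K L x).comp (LinearMap.snd K L K)) 0

@[simp] lemma op_apply {L : Type*} [LieRing L] [LieAlgebra K L] (x f : L) (c : K) :
    op x (f, c) = (⁅x, f⁆ + c • x, 0) := by
  simp [op]

/-- Action of the free associative algebra. -/
noncomputable def act (K : Type*) [Field K] (n : ℕ) :
    Assoc K n →ₐ[K] Module.End K (FreeLieAlgebra K (Fin n) × K) :=
  MonoidAlgebra.lift K _ _ (FreeMonoid.lift (fun i => op (FreeLieAlgebra.of K i)))

/-- The Dynkin operator. -/
noncomputable def dyn (K : Type*) [Field K] (n : ℕ) :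
    Assoc K n →ₗ[K] FreeLieAlgebra K (Fin n) :=
  (LinearMap.fst K _ K).comp ((LinearMap.applyₗ (0, 1)).comp (act K n).toLinearMap)

lemma dyn_apply (a : Assoc K n) : dyn K n a = (act K n a (0, 1)).1 := rfl

lemma act_phi (y : FreeLieAlgebra K (Fin n)) :
    ∀ f c, act K n (phi K n y) (f, c) = (⁅y, f⁆ + c • dyn K n (phi K n y), 0) := by
  suffices h : ∃ e, ∀ f c, act K n (phi K n y) (f, c) = (⁅y, f⁆ + c • e, 0) by
    obtain ⟨e, he⟩ := h
    have : dyn K n (phi K n y) = e := by rw [dyn_apply, he]; simp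
    rwa [this]
  refine free_induct (fun y => ∃ e, ∀ f c, act K n (phi K n y) (f, c) = (⁅y, f⁆ + c • e, 0))
    ⟨0, fun f c => by ext <;> simp⟩ ?_ ?_ ?_ ?_ y
  · rintro a b ⟨e, he⟩ ⟨e', he'⟩
    refine ⟨e + e', fun f c => ?_⟩
    rw [map_add, map_add, LinearMap.add_apply, he, he']
    ext <;> simp
    abel
  · rintro t a ⟨e, he⟩
    refine ⟨t • e, fun f c => ?_⟩
    rw [map_smul, map_smul, LinearMap.smul_apply, he]
    ext <;> simp [smul_comm t c]
  · rintro a b ⟨e, he⟩ ⟨e', he'⟩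
    refine ⟨⁅a, e'⁆ - ⁅b, e⁆, fun f c => ?_⟩
    rw [LieHom.map_lie, Ring.lie_def, map_sub, map_mul, map_mul, LinearMap.sub_apply,
      Module.End.mul_apply, Module.End.mul_apply, he, he, he', he']
    ext
    · simp [smul_sub]
      abel
    · simp
  · intro i
    refine ⟨FreeLieAlgebra.of K i, fun f c => ?_⟩
    simp [phi, letter, act]

/-- The Euler derivation. -/
noncomputable def euler (K : Type*) [Field K] (n : ℕ) :
    FreeLieAlgebra K (Fin n) →ₗ[K] FreeLieAlgebra K (Fin n) :=
  (dyn K n).comp (phi K n : FreeLieAlgebra K (Fin n) →ₗ[K] Assoc K n)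

lemma euler_apply (y : FreeLieAlgebra K (Fin n)) : euler K n y = dyn K n (phi K n y) := rfl

lemma euler_lie (a b : FreeLieAlgebra K (Fin n)) :
    euler K n ⁅a, b⁆ = ⁅a, euler K n b⁆ - ⁅b, euler K n a⁆ := by
  rw [euler_apply, dyn_apply, LieHom.map_lie, Ring.lie_def, map_sub, map_mul, map_mul,
    LinearMap.sub_apply, Module.End.mul_apply, Module.End.mul_apply, act_phi, act_phi, act_phi,
    act_phi, ← euler_apply, ← euler_apply]
  simp

lemma euler_of (i : Fin n) : euler K n (FreeLieAlgebra.of K i) = FreeLieAlgebra.of K i := by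
  rw [euler_apply, dyn_apply]
  simp [phi, letter, act]

lemma euler_zero (y : FreeLieAlgebra K (Fin n)) :
    euler K n y - y ∈ lowerCentralSeries K (FreeLieAlgebra K (Fin n))
      (FreeLieAlgebra K (Fin n)) 1 := by
  have hl : ∀ a b : FreeLieAlgebra K (Fin n), ⁅a, b⁆ ∈ lowerCentralSeries K
      (FreeLieAlgebra K (Fin n)) (FreeLieAlgebra K (Fin n)) 1 :=
    fun a b => lie_mem_lcs_succ a (k := 0) (by simp)
  refine free_induct (fun y => euler K n y - y ∈ lowerCentralSeries K (FreeLieAlgebra K (Fin n))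
      (FreeLieAlgebra K (Fin n)) 1) ?_ ?_ ?_ ?_ ?_ y
  · rw [map_zero, sub_zero]; exact zero_mem _
  · intro a b ha hb
    rw [map_add, add_sub_add_comm]
    exact add_mem ha hb
  · intro c a ha
    rw [map_smul, ← smul_sub]
    exact SMulMemClass.smul_mem _ ha
  · intro a b _ _
    rw [euler_lie]
    exact sub_mem (sub_mem (hl _ _) (hl _ _)) (hl _ _)
  · intro i
    rw [euler_of, sub_self]; exact zero_mem _

lemma euler_gr (k : ℕ) : ∀ y ∈ lowerCentralSeries K (FreeLieAlgebra K (Fin n))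
      (FreeLieAlgebra K (Fin n)) k,
    euler K n y - ((k + 1 : ℕ) : K) • y ∈ lowerCentralSeries K (FreeLieAlgebra K (Fin n))
      (FreeLieAlgebra K (Fin n)) (k + 1) := by
  induction k with
  | zero => intro y _; simpa using euler_zero y
  | succ k ih =>
    intro y hy
    have key := lcs_succ_induct k ((lowerCentralSeries K (FreeLieAlgebra K (Fin n))
      (FreeLieAlgebra K (Fin n)) (k + 1 + 1)).toSubmodule.comap
        (euler K n - ((k + 1 + 1 : ℕ) : K) • LinearMap.id)) ?_ y hy
    · exact key
    intro a b hb
    rw [Submodule.mem_comap, LieSubmodule.mem_toSubmodule]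
    have h1 := lie_mem_lcs_succ a (ih b hb)
    have h2 := lie_lcs k 1 b _ hb (euler_zero a)
    have h3 := sub_mem h1 h2
    convert h3 using 1
    simp only [LinearMap.sub_apply, LinearMap.smul_apply, LinearMap.id_apply, euler_lie, lie_sub,
      lie_smul]
    rw [← lie_skew a b, Nat.cast_succ (k + 1), add_smul, one_smul]
    simp only [smul_neg]
    abel

lemma word_mem (k : ℕ) : ∀ w : FreeMonoid (Fin n), w.length = k + 1 →
    ∃ f ∈ lowerCentralSeries K (FreeLieAlgebra K (Fin n)) (FreeLieAlgebra K (Fin n)) k,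
      FreeMonoid.lift (fun i => op (K := K) (FreeLieAlgebra.of K i)) w (0, 1) = (f, 0) := by
  induction k with
  | zero =>
    intro w hw
    obtain ⟨i, rfl⟩ := FreeMonoid.length_eq_one.1 hw
    exact ⟨FreeLieAlgebra.of K i, by simp, by simp⟩
  | succ k ih =>
    intro w hw
    induction w using FreeMonoid.casesOn with
    | one => simp at hw
    | of_mul i w =>
      obtain ⟨f, hf, h⟩ := ih w (by
        simp only [FreeMonoid.length_mul, FreeMonoid.length_of] at hw; omega)
      refine ⟨⁅FreeLieAlgebra.of K i, f⁆, lie_mem_lcs_succ _ hf, ?_⟩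
      rw [map_mul, Module.End.mul_apply, h]
      simp

lemma dyn_mem {m : ℕ} {a : Assoc K n} (ha : a ∈ fil K n (m + 1)) :
    dyn K n a ∈ lowerCentralSeries K (FreeLieAlgebra K (Fin n)) (FreeLieAlgebra K (Fin n)) m := by
  have : dyn K n a = a.coeff.sum (fun w c =>
      c • (FreeMonoid.lift (fun i => op (K := K) (FreeLieAlgebra.of K i)) w (0, 1)).1) := by
    rw [dyn_apply, act, MonoidAlgebra.lift_apply, Finsupp.sum, Finsupp.sum, LinearMap.sum_apply, Prod.fst_sum]
    rfl
  rw [this]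
  refine sum_mem fun w hw => SMulMemClass.smul_mem _ ?_
  have hl : m + 1 ≤ w.length := by
    by_contra h
    exact (Finsupp.mem_support_iff.1 hw) (ha w (by omega))
  obtain ⟨f, hf, h⟩ := word_mem (K := K) (w.length - 1) w (by omega)
  rw [h]
  exact lcs_anti (by omega) hf

lemma mem_of_euler [CharZero K] {m : ℕ} {y : FreeLieAlgebra K (Fin n)}
    (h : euler K n y ∈ lowerCentralSeries K (FreeLieAlgebra K (Fin n))
      (FreeLieAlgebra K (Fin n)) m) :
    y ∈ lowerCentralSeries K (FreeLieAlgebra K (Fin n)) (FreeLieAlgebra K (Fin n)) m := by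
  suffices ∀ j ≤ m, y ∈ lowerCentralSeries K (FreeLieAlgebra K (Fin n))
      (FreeLieAlgebra K (Fin n)) j from this m le_rfl
  intro j
  induction j with
  | zero => intro _; simp
  | succ j ih =>
    intro hj
    have h1 := euler_gr j y (ih (by omega))
    have h2 := sub_mem (lcs_anti hj h) h1
    rw [sub_sub_cancel] at h2
    have h3 := SMulMemClass.smul_mem (((j + 1 : ℕ) : K)⁻¹) h2
    rwa [smul_smul, inv_mul_cancel₀ (by exact_mod_cast Nat.succ_ne_zero j), one_smul] at h3

lemma center_aux [CharZero K] {i j : Fin n} (hij : i ≠ j) {m : ℕ} {y : FreeLieAlgebra K (Fin n)}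
    (hi : ⁅FreeLieAlgebra.of K i, y⁆ ∈ lowerCentralSeries K (FreeLieAlgebra K (Fin n))
      (FreeLieAlgebra K (Fin n)) (m + 1))
    (hj : ⁅FreeLieAlgebra.of K j, y⁆ ∈ lowerCentralSeries K (FreeLieAlgebra K (Fin n))
      (FreeLieAlgebra K (Fin n)) (m + 1)) :
    y ∈ lowerCentralSeries K (FreeLieAlgebra K (Fin n)) (FreeLieAlgebra K (Fin n)) m := by
  have ho : ∀ l : Fin n, phi K n (FreeLieAlgebra.of K l) = letter K l := fun l => by simp [phi]
  apply mem_of_euler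
  apply dyn_mem
  refine fil_of_comm hij (phi_mem_one y) ?_ ?_
  · have := phi_mem _ _ hi
    rwa [LieHom.map_lie, ho] at this
  · have := phi_mem _ _ hj
    rwa [LieHom.map_lie, ho] at this

end free

section quot
variable {K : Type*} [Field K] {n d : ℕ}

/-- the projection -/
noncomputable def proj (K : Type*) [Field K] (n d : ℕ) :
    FreeLieAlgebra K (Fin n) →ₗ⁅K⁆ FreeNilpotentLieAlgebra K n d :=
  { toLinearMap := (LieSubmodule.Quotient.mk' (lowerCentralSeries K (FreeLieAlgebra K (Fin n))
      (FreeLieAlgebra K (Fin n)) d) : _ →ₗ[K] _)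
    map_lie' := fun {_ _} => rfl }

lemma proj_surj : Function.Surjective (proj K n d) :=
  LieSubmodule.Quotient.surjective_mk' _

lemma proj_eq_zero {y : FreeLieAlgebra K (Fin n)} : proj K n d y = 0 ↔
    y ∈ lowerCentralSeries K (FreeLieAlgebra K (Fin n)) (FreeLieAlgebra K (Fin n)) d :=
  LieSubmodule.Quotient.mk_eq_zero _

lemma proj_lcs {k : ℕ} {y : FreeLieAlgebra K (Fin n)}
    (hy : y ∈ lowerCentralSeries K (FreeLieAlgebra K (Fin n)) (FreeLieAlgebra K (Fin n)) k) :
    proj K n d y ∈ lowerCentralSeries K (FreeNilpotentLieAlgebra K n d)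
      (FreeNilpotentLieAlgebra K n d) k :=
  LieIdeal.map_lowerCentralSeries_le k (LieIdeal.mem_map hy)

lemma lcs_bot : lowerCentralSeries K (FreeNilpotentLieAlgebra K n d)
      (FreeNilpotentLieAlgebra K n d) d = ⊥ := by
  rw [← LieIdeal.lowerCentralSeries_map_eq d (proj_surj (K := K) (n := n) (d := d)), eq_bot_iff,
    LieIdeal.map_le]
  rintro _ ⟨y, hy, rfl⟩
  exact proj_eq_zero.2 hy

end quot

end PosDer

open PosDer in
/-- `U = UL[V,d]`, the positively graded part of the derivation algebra of the free
nilpotent Lie algebra of class `d ≥ 2` on `n ≥ 2` generators, is nilpotent of class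
exactly `d − 1`, and its center consists exactly of the derivations of top degree
`d − 1` (those shifting the filtration by `d − 1`). -/
theorem posPart_derivations_nilpotent_class_and_center
    (K : Type*) [Field K] [CharZero K] (n d : ℕ) (hn : 2 ≤ n) (hd : 2 ≤ d) :
    (∀ l : List (LieDerivation K (FreeNilpotentLieAlgebra K n d)
        (FreeNilpotentLieAlgebra K n d)),
      l.length = d → (∀ δ ∈ l, IsPosDegreeDerivation K n d δ) → iterBracket l = 0) ∧
    (∃ l : List (LieDerivation K (FreeNilpotentLieAlgebra K n d)
        (FreeNilpotentLieAlgebra K n d)),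
      l.length = d - 1 ∧ (∀ δ ∈ l, IsPosDegreeDerivation K n d δ) ∧ iterBracket l ≠ 0) ∧
    (∀ δ : LieDerivation K (FreeNilpotentLieAlgebra K n d) (FreeNilpotentLieAlgebra K n d),
      IsPosDegreeDerivation K n d δ →
        ((∀ δ', IsPosDegreeDerivation K n d δ' → ⁅δ, δ'⁆ = 0) ↔
          (∀ k : ℕ, ∀ x ∈ LieModule.lowerCentralSeries K (FreeNilpotentLieAlgebra K n d)
              (FreeNilpotentLieAlgebra K n d) k,
            δ x ∈ LieModule.lowerCentralSeries K (FreeNilpotentLieAlgebra K n d)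
              (FreeNilpotentLieAlgebra K n d) (k + (d - 1))))) := by
  have hbot := lcs_bot (K := K) (n := n) (d := d)
  let i : Fin n := ⟨0, by omega⟩
  let j : Fin n := ⟨1, by omega⟩
  have hij : i ≠ j := by simp [i, j]
  refine ⟨?_, ?_, ?_⟩
  · intro l hl h
    have hs := shift_iter l (by rintro rfl; simp at hl; omega) h
    rw [hl] at hs
    exact hs.eq_zero hbot
  · set x := proj K n d (FreeLieAlgebra.of K i) with hx
    set y := proj K n d (FreeLieAlgebra.of K j) with hy
    refine ⟨List.replicate (d - 2) (LieDerivation.ad K _ x) ++ [LieDerivation.ad K _ y],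
      by simp; omega, ?_, ?_⟩
    · intro δ hδ
      rw [List.mem_append, List.mem_singleton] at hδ
      rcases hδ with h | rfl
      · rw [List.eq_of_mem_replicate h]; exact shift_ad x
      · exact shift_ad y
    · rw [iter_ad]
      intro h
      have hp : ∀ m, ((LieAlgebra.ad K _ x : Module.End K _) ^ m) y = proj K n d
          (((LieAlgebra.ad K _ (FreeLieAlgebra.of K i) : Module.End K _) ^ m)
            (FreeLieAlgebra.of K j)) := by
        intro m
        induction m with
        | zero => simp [hy]
        | succ m ih =>
          rw [pow_succ', pow_succ', Module.End.mul_apply, Module.End.mul_apply, ih,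
            LieAlgebra.ad_apply, LieAlgebra.ad_apply, LieHom.map_lie]
      have h1 : ⁅x, ((LieAlgebra.ad K _ x : Module.End K _) ^ (d - 2)) y⁆ = 0 := by
        have h2 := LieDerivation.congr_fun h x
        rw [← lie_skew, neg_eq_zero]
        simpa using h2
      rw [← LieAlgebra.ad_apply (R := K), ← Module.End.mul_apply, ← pow_succ', hp,
        proj_eq_zero] at h1
      have h3 := phi_mem _ _ h1 (FreeMonoid.of i ^ (d - 2 + 1) * FreeMonoid.of j) (by
        have hl : ∀ m, (FreeMonoid.of i ^ m).length = m := by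
          intro m
          induction m with
          | zero => simp
          | succ m ih => rw [pow_succ, FreeMonoid.length_mul, ih, FreeMonoid.length_of]
        rw [FreeMonoid.length_mul, hl, FreeMonoid.length_of]; omega)
      have h4 := phi_pow (K := K) i j hij (d - 2 + 1)
      exact one_ne_zero (h4.symm.trans h3)
  · intro δ hδ
    constructor
    · intro h
      refine Shift.of_zero (m := d - 1) fun x => ?_
      have h1 : LieDerivation.ad K _ (δ x) = 0 := by
        rw [← LieDerivation.lie_der_ad_eq_ad_der]
        exact h _ (shift_ad x)
      obtain ⟨y, hy⟩ := proj_surj (δ x)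
      have h2 : ∀ z : FreeLieAlgebra K (Fin n), ⁅z, y⁆ ∈ LieModule.lowerCentralSeries K (FreeLieAlgebra K (Fin n))
          (FreeLieAlgebra K (Fin n)) (d - 1 + 1) := by
        intro z
        rw [Nat.sub_add_cancel (by omega), ← proj_eq_zero, LieHom.map_lie, hy, ← lie_skew,
          neg_eq_zero]
        simpa using LieDerivation.congr_fun h1 (proj K n d z)
      rw [← hy]
      exact proj_lcs (center_aux hij (h2 _) (h2 _))
    · intro h δ' hδ'
      have h1 : Shift K (d - 1) δ := h
      have h2 : Shift K 1 δ' := hδ'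
      have h3 := h1.lie h2
      rw [Nat.sub_add_cancel (by omega)] at h3
      exact h3.eq_zero hbot
end

section
/- Let g be a finite-dimensional Lie algebra over a field of characteristic 0 with trivial center. Then the derivation tower g ⊆ Der(g) ⊆ Der²(g) ⊆ ⋯ (where each algebra is identified with the ideal of inner derivations in the next, all maps being injective since all the algebras have trivial center) stabilizes after finitely many steps: there exists k such that every derivation of Der^k(g) is inner. -/
universe u v

/-- A bundled Lie algebra over `K`, used to form the derivation tower. -/
structure LieAlgBundle (K : Type u) [CommRing K] : Type (max u (v + 1)) where
  carrier : Type v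
  [lieRing : LieRing carrier]
  [lieAlgebra : LieAlgebra K carrier]

attribute [instance] LieAlgBundle.lieRing LieAlgBundle.lieAlgebra

/-- The derivation tower: `derTower K B 0 = B` and
`derTower K B (n+1) = Der (derTower K B n)`. -/
def derTower (K : Type u) [CommRing K] (B : LieAlgBundle.{u, v} K) :
    ℕ → LieAlgBundle.{u, v} K
  | 0 => B
  | n + 1 =>
      { carrier := LieDerivation K (derTower K B n).carrier (derTower K B n).carrier }

namespace ChevTower

open LieModule

attribute [local instance] LieRing.ofAssociativeRing

/-- If a Lie algebra acts through a nilpotent quotient on a finite-dimensional module without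
invariants, then the module equals every term of its lower central series. -/
lemma lcs_eq_top {K : Type*} [Field K] {g M : Type*} [LieRing g] [LieAlgebra K g]
    [AddCommGroup M] [Module K M] [LieRingModule g M] [LieModule K g M]
    [FiniteDimensional K M] (N : ℕ)
    (hN : ∀ w ∈ lowerCentralSeries K g g N, ∀ m : M, ⁅w, m⁆ = 0)
    (h0 : ∀ m : M, (∀ a : g, ⁅a, m⁆ = 0) → m = 0) (k : ℕ) :
    lowerCentralSeries K g M k = ⊤ := by
  let T := (toEnd K g M).range
  have hT : LieRing.IsNilpotent T := by
    have hs := (toEnd K g M).surjective_rangeRestrict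
    rw [LieRing.IsNilpotent, LieModule.isNilpotent_iff K]
    refine ⟨N, ?_⟩
    rw [← LieIdeal.lowerCentralSeries_map_eq N hs, LieIdeal.map_eq_bot_iff]
    intro w hw
    rw [LieHom.mem_ker]
    apply Subtype.ext
    ext m
    exact hN w hw m
  have hc := isCompl_genWeightSpace_zero_posFittingComp K T M
  have hz : genWeightSpace M (0 : T → K) = ⊥ := by
    by_contra hne
    have : Nontrivial (genWeightSpace M (0 : T → K)) :=
      (LieSubmodule.nontrivial_iff_ne_bot K T M).mpr hne
    obtain ⟨⟨m, hm⟩, hm0⟩ := @exists_ne _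
      (nontrivial_max_triv_of_isNilpotent K T (genWeightSpace M (0 : T → K))) 0
    apply hm0
    rw [mem_maxTrivSubmodule] at hm
    apply Subtype.ext
    apply Subtype.ext
    apply h0
    intro a
    have := hm ⟨toEnd K g M a, LieHom.mem_range_self _ a⟩
    exact congrArg Subtype.val this
  rw [hz] at hc
  have htop : posFittingComp K T M = ⊤ := by simpa using hc.sup_eq_top
  have h1 : lowerCentralSeries K T M k = ⊤ := by
    rw [← top_le_iff, ← htop]
    exact (posFittingComp_le_iInf_lowerCentralSeries K T M).trans (iInf_le _ k)
  rw [← LieSubmodule.toSubmodule_inj, ← coe_lcs_range_toEnd_eq, h1]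
  simp

variable {K : Type*} [Field K] {g L : Type*} [LieRing g] [LieAlgebra K g]
  [LieRing L] [LieAlgebra K L]

/-- Iterated brackets `[f g, [f g, ... L]]`. -/
def U (f : g →ₗ⁅K⁆ L) : ℕ → Submodule K L
  | 0 => ⊤
  | k + 1 => Submodule.span K {y | ∃ a : g, ∃ x ∈ U f k, y = ⁅f a, x⁆}

lemma lie_mem_U (f : g →ₗ⁅K⁆ L) {k : ℕ} (a : g) {x : L} (hx : x ∈ U f k) :
    ⁅f a, x⁆ ∈ U f (k + 1) := Submodule.subset_span ⟨a, x, hx, rfl⟩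

lemma U_succ_le (f : g →ₗ⁅K⁆ L) {k : ℕ} {S : Submodule K L}
    (h : ∀ a : g, ∀ x ∈ U f k, ⁅f a, x⁆ ∈ S) : U f (k + 1) ≤ S := by
  refine Submodule.span_le.mpr ?_
  rintro _ ⟨a, x, hx, rfl⟩
  exact h a x hx

lemma lcs_succ_le {M : Type*} [AddCommGroup M] [Module K M] [LieRingModule g M] [LieModule K g M]
    {k : ℕ} {S : Submodule K M}
    (h : ∀ a : g, ∀ x ∈ lowerCentralSeries K g M k, ⁅a, x⁆ ∈ S) :
    (lowerCentralSeries K g M (k + 1)).toSubmodule ≤ S := by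
  rw [lowerCentralSeries_succ, LieSubmodule.lieIdeal_oper_eq_linear_span']
  refine Submodule.span_le.mpr ?_
  rintro _ ⟨a, -, x, hx, rfl⟩
  exact h a x hx

lemma lie_mem_lcs {M : Type*} [AddCommGroup M] [Module K M] [LieRingModule g M]
    [LieModule K g M] {k : ℕ} (a : g) {x : M} (hx : x ∈ lowerCentralSeries K g M k) :
    ⁅a, x⁆ ∈ lowerCentralSeries K g M (k + 1) := by
  rw [lowerCentralSeries_succ]
  exact LieSubmodule.lie_mem_lie (LieSubmodule.mem_top a) hx

/-- `[f (g^m), U_k] ⊆ U_{k+m+1}`. -/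
lemma lcs_lie_U (f : g →ₗ⁅K⁆ L) (m : ℕ) : ∀ w ∈ lowerCentralSeries K g g m,
    ∀ k, ∀ x ∈ U f k, ⁅f w, x⁆ ∈ U f (k + m + 1) := by
  induction m with
  | zero => intro w _ k x hx; exact lie_mem_U f w hx
  | succ m ih =>
    let S : Submodule K g :=
      { carrier := {w | ∀ k, ∀ x ∈ U f k, ⁅f w, x⁆ ∈ U f (k + (m + 1) + 1)}
        add_mem' := by
          intro a b ha hb k x hx
          rw [map_add, add_lie]
          exact Submodule.add_mem _ (ha k x hx) (hb k x hx)
        zero_mem' := by intro k x _; simp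
        smul_mem' := by
          intro c a ha k x hx
          rw [map_smul, smul_lie]
          exact Submodule.smul_mem _ _ (ha k x hx) }
    have : (lowerCentralSeries K g g (m + 1)).toSubmodule ≤ S := by
      apply lcs_succ_le
      intro a w hw k x hx
      rw [LieHom.map_lie, lie_lie]
      refine Submodule.sub_mem _ ?_ ?_
      · exact lie_mem_U f a (ih w hw k x hx)
      · have := ih w hw (k + 1) _ (lie_mem_U f a hx)
        rwa [show k + 1 + m + 1 = k + (m + 1) + 1 by ring] at this
    exact fun w hw => this hw

lemma U_le_map (f : g →ₗ⁅K⁆ L) {n : ℕ} (hn : U f n ≤ LinearMap.range (f : g →ₗ[K] L)) (m : ℕ) :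
    U f (n + m) ≤ (lowerCentralSeries K g g m).toSubmodule.map (f : g →ₗ[K] L) := by
  induction m with
  | zero => simpa using hn
  | succ m ih =>
    refine U_succ_le f ?_
    intro a x hx
    obtain ⟨w, hw, rfl⟩ := ih hx
    exact ⟨⁅a, w⁆, lie_mem_lcs a hw, f.map_lie a w⟩

lemma centralizer_le (f : g →ₗ⁅K⁆ L) [FiniteDimensional K L] (N : ℕ)
    (h0 : ∀ x : L, (∀ a, ⁅f a, x⁆ = 0) → x = 0) (x : L)
    (hx : ∀ w ∈ lowerCentralSeries K g g N, ⁅f w, x⁆ = 0) (k : ℕ) : x ∈ U f k := by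
  let _ := LieRingModule.compLieHom L f
  have : LieModule K g L := LieModule.compLieHom L f
  have hb : ∀ (a : g) (y : L), ⁅a, y⁆ = ⁅f a, y⁆ := fun _ _ => rfl
  let C : LieSubmodule K g L :=
    { carrier := {y | ∀ w ∈ lowerCentralSeries K g g N, ⁅w, y⁆ = 0}
      add_mem' := by
        intro a b ha hb w hw
        rw [lie_add, ha w hw, hb w hw, add_zero]
      zero_mem' := by intro w _; simp
      smul_mem' := by
        intro c a ha w hw
        rw [lie_smul, ha w hw, smul_zero]
      lie_mem := by
        intro a y hy w hw
        rw [leibniz_lie, hy w hw, lie_zero, add_zero]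
        exact hy _ (lie_mem_left K g (lowerCentralSeries K g g N) w a hw) }
  have key := lcs_eq_top (K := K) (g := g) (M := C) N
    (fun w hw m => Subtype.ext (m.2 w hw))
    (fun m hm => Subtype.ext (h0 m fun a => congrArg Subtype.val (hm a)))
  have hU : ∀ k, (lowerCentralSeries K g C k).toSubmodule ≤
      (U f k).comap C.toSubmodule.subtype := by
    intro k
    induction k with
    | zero => intro y _; trivial
    | succ k ih =>
      apply lcs_succ_le
      intro a y hy
      exact lie_mem_U f a (ih hy)
  have := hU k (x := ⟨x, hx⟩) (by rw [key k]; trivial)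
  exact this

lemma finrank_bound (f : g →ₗ⁅K⁆ L) [FiniteDimensional K g] [FiniteDimensional K L] (n : ℕ)
    (hn : U f n ≤ LinearMap.range (f : g →ₗ[K] L))
    (h0 : ∀ x : L, (∀ a, ⁅f a, x⁆ = 0) → x = 0) :
    Module.finrank K L ≤
      Module.finrank K g * Module.finrank K g + Module.finrank K g := by
  have hwf : WellFoundedLT (LieSubmodule K g g) :=
    LieSubmodule.wellFoundedLT_of_isArtinian K g g
  obtain ⟨N, hN⟩ : ∃ N, ∀ m, N ≤ m →
      lowerCentralSeries K g g N = lowerCentralSeries K g g m :=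
    WellFoundedGT.monotone_chain_condition
      (⟨fun n => OrderDual.toDual (lowerCentralSeries K g g n),
        antitone_lowerCentralSeries K g g⟩ : ℕ →o (LieSubmodule K g g)ᵒᵈ)
  set W := lowerCentralSeries K g g N with hW
  let W' := W.toSubmodule.map (f : g →ₗ[K] L)
  have hid : ∀ w ∈ W, ∀ x : L, ⁅x, f w⁆ ∈ W' := by
    intro w hw x
    rw [← lie_skew]
    refine Submodule.neg_mem _ ?_
    rw [hN (n + N) (by omega)] at hw
    have h1 := lcs_lie_U f _ w hw 0 x trivial
    rw [show 0 + (n + N) + 1 = n + (N + 1) by ring] at h1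
    have h2 := U_le_map f hn _ h1
    rwa [← hN (N + 1) (by omega)] at h2
  let φ : L →ₗ[K] (W.toSubmodule →ₗ[K] W') :=
    { toFun := fun x =>
        { toFun := fun w => ⟨⁅x, f w.1⁆, hid w.1 w.2 x⟩
          map_add' := by intro a b; apply Subtype.ext; simp
          map_smul' := by intro c b; apply Subtype.ext; simp }
      map_add' := by intro a b; ext; simp
      map_smul' := by intro a b; ext; simp }
  have hker : LinearMap.ker φ ≤ W' := by
    intro x hx
    have hx' : ∀ w ∈ W, ⁅f w, x⁆ = 0 := by
      intro w hw
      have := congrArg Subtype.val (LinearMap.congr_fun (LinearMap.mem_ker.mp hx) ⟨w, hw⟩)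
      have h3 : ⁅x, f w⁆ = 0 := this
      rw [← lie_skew, h3, neg_zero]
    exact U_le_map f hn N (centralizer_le f N h0 x hx' (n + N))
  have e1 := LinearMap.finrank_range_add_finrank_ker φ
  have e2 : Module.finrank K (LinearMap.ker φ) ≤ Module.finrank K W' :=
    Submodule.finrank_mono hker
  have e3 : Module.finrank K (LinearMap.range φ) ≤ _ := Submodule.finrank_le _
  rw [Module.finrank_linearMap] at e3
  have e4 : Module.finrank K W' ≤ Module.finrank K W.toSubmodule := Submodule.finrank_map_le _ _
  have e5 : Module.finrank K W.toSubmodule ≤ Module.finrank K g := Submodule.finrank_le _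
  have e6 := Nat.mul_le_mul e5 (e4.trans e5)
  omega

lemma step_U (f : g →ₗ⁅K⁆ L) (k : ℕ) :
    U ((LieDerivation.ad K L).comp f) (k + 1) ≤
      (U f k).map (LieDerivation.ad K L : L →ₗ[K] LieDerivation K L L) := by
  induction k with
  | zero =>
    apply U_succ_le
    intro a D _
    refine ⟨-(D (f a)), trivial, ?_⟩
    rw [LieHom.comp_apply, ← lie_skew, LieDerivation.lie_der_ad_eq_ad_der]
    exact map_neg _ _
  | succ k ih =>
    apply U_succ_le
    intro a D hD
    obtain ⟨x, hx, rfl⟩ := ih hD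
    exact ⟨⁅f a, x⁆, lie_mem_U f a hx, LieHom.map_lie _ _ _⟩

lemma ad_inj (f : g →ₗ⁅K⁆ L) (h0 : ∀ x : L, (∀ a, ⁅f a, x⁆ = 0) → x = 0) :
    Function.Injective (LieDerivation.ad K L) := by
  rw [injective_iff_map_eq_zero]
  intro x hx
  apply h0
  intro a
  have := DFunLike.congr_fun hx (f a)
  rw [LieDerivation.ad_apply_apply] at this
  rw [← lie_skew, this]
  simp

lemma step_cent (f : g →ₗ⁅K⁆ L) (n : ℕ) (hn : U f n ≤ LinearMap.range (f : g →ₗ[K] L))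
    (h0 : ∀ x : L, (∀ a, ⁅f a, x⁆ = 0) → x = 0) (D : LieDerivation K L L)
    (hD : ∀ a, ⁅(LieDerivation.ad K L).comp f a, D⁆ = 0) : D = 0 := by
  have hDa : ∀ a, D (f a) = 0 := by
    intro a
    apply ad_inj f h0
    rw [← LieDerivation.lie_der_ad_eq_ad_der, ← lie_skew]
    have := hD a
    rw [LieHom.comp_apply] at this
    rw [this, neg_zero, map_zero]
  have hk : ∀ j k, j + k = n → ∀ x ∈ U f k, D x = 0 := by
    intro j
    induction j with
    | zero =>
      intro k hk x hx
      obtain rfl : k = n := by omega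
      obtain ⟨a, rfl⟩ := hn hx
      exact hDa a
    | succ j ih =>
      intro k hk x hx
      apply h0
      intro a
      have h1 := ih (k + 1) (by omega) _ (lie_mem_U f a hx)
      rw [LieDerivation.apply_lie_eq_add, hDa a, zero_lie, add_zero] at h1
      exact h1
  ext x
  exact hk n 0 (by omega) x trivial

end ChevTower

/-- Chevalley's theorem: the derivation tower of a finite-dimensional Lie algebra with
trivial center over a field of characteristic zero stabilizes after finitely many
steps: for some `k`, the adjoint map `ad : Der^k(g) → Der^{k+1}(g) = Der (Der^k g)`
is an isomorphism (in particular every derivation of `Der^k(g)` is inner). -/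
theorem chevalley_derivation_tower_stabilizes
    (K : Type u) [Field K] [CharZero K]
    (g : Type v) [LieRing g] [LieAlgebra K g] [FiniteDimensional K g]
    (hZ : LieAlgebra.center K g = ⊥) :
    ∃ k : ℕ, Function.Bijective
      (LieDerivation.ad K ((derTower K ⟨g⟩ k).carrier)) := by
  have main : ∀ k : ℕ, FiniteDimensional K (derTower K ⟨g⟩ k).carrier ∧
      ∃ f : g →ₗ⁅K⁆ (derTower K ⟨g⟩ k).carrier,
        (∃ n, ChevTower.U f n ≤ LinearMap.range (f : g →ₗ[K] (derTower K ⟨g⟩ k).carrier)) ∧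
        ∀ x : (derTower K ⟨g⟩ k).carrier, (∀ a, ⁅f a, x⁆ = 0) → x = 0 := by
    intro k
    induction k with
    | zero =>
      refine ⟨‹FiniteDimensional K g›, (LieHom.id : g →ₗ⁅K⁆ g), ⟨0, fun x _ => ⟨x, rfl⟩⟩, ?_⟩
      intro x hx
      have : (x : g) ∈ LieAlgebra.center K g := (LieModule.mem_maxTrivSubmodule K g g x).mpr hx
      rw [hZ] at this
      exact this
    | succ k ih =>
      obtain ⟨hfd, f, ⟨n, hn⟩, h0⟩ := ih
      refine ⟨?_, (LieDerivation.ad K (derTower K ⟨g⟩ k).carrier).comp f, ⟨n + 1, ?_⟩, ?_⟩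
      · have : IsNoetherian K (LieDerivation K (derTower K ⟨g⟩ k).carrier
          (derTower K ⟨g⟩ k).carrier) := inferInstance
        exact (inferInstance : Module.Finite K (LieDerivation K (derTower K ⟨g⟩ k).carrier
          (derTower K ⟨g⟩ k).carrier))
      · refine (ChevTower.step_U f n).trans ?_
        rintro _ ⟨x, hx, rfl⟩
        obtain ⟨a, rfl⟩ := hn hx
        exact ⟨a, rfl⟩
      · exact ChevTower.step_cent f n hn h0
  have hbd : ∀ k, Module.finrank K (derTower K ⟨g⟩ k).carrier ≤
      Module.finrank K g * Module.finrank K g + Module.finrank K g := by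
    intro k
    obtain ⟨hfd, f, ⟨n, hn⟩, h0⟩ := main k
    exact ChevTower.finrank_bound f n hn h0
  have hinj : ∀ k, Function.Injective (LieDerivation.ad K (derTower K ⟨g⟩ k).carrier) := by
    intro k
    obtain ⟨hfd, f, -, h0⟩ := main k
    exact ChevTower.ad_inj f h0
  by_contra hcon
  push Not at hcon
  have hlt : ∀ k, Module.finrank K (derTower K ⟨g⟩ k).carrier <
      Module.finrank K (derTower K ⟨g⟩ (k + 1)).carrier := by
    intro k
    have i1 := (main k).1
    have i2 : FiniteDimensional K (LieDerivation K (derTower K ⟨g⟩ k).carrier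
          (derTower K ⟨g⟩ k).carrier) := (main (k + 1)).1
    let A : (derTower K ⟨g⟩ k).carrier →ₗ[K] LieDerivation K (derTower K ⟨g⟩ k).carrier
          (derTower K ⟨g⟩ k).carrier := (LieDerivation.ad K (derTower K ⟨g⟩ k).carrier : _ →ₗ[K] _)
    have i3 := (main (k + 1)).1
    have hA : Function.Injective A := hinj k
    refine lt_of_le_of_ne (LinearMap.finrank_le_finrank_of_injective hA) fun he => ?_
    exact hcon k ⟨hinj k, (LinearMap.injective_iff_surjective_of_finrank_eq_finrank he).mp hA⟩
  have hge : ∀ k, k ≤ Module.finrank K (derTower K ⟨g⟩ k).carrier := by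
    intro k
    induction k with
    | zero => exact Nat.zero_le _
    | succ k ih => exact Nat.succ_le_of_lt (lt_of_le_of_lt ih (hlt k))
  have h1 := hge (Module.finrank K g * Module.finrank K g + Module.finrank K g + 1)
  have h2 := hbd (Module.finrank K g * Module.finrank K g + Module.finrank K g + 1)
  omega
end
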